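/- arXiv:2202.12708 — 2 statements merged into one kernel-verified Lean document; each statement's English description precedes it below -/
import Mathlib

section
/- Let m₁, m₂, m₃ > 0, ω ≠ 0, θ_k ∈ (0, π) with sin θ_k > 0 and cos θ_k ≠ 0 for all k, φ_k ∈ ℝ, and γ ∈ ℝ. Assume: (i) U_ij = −γ cos θ_i cos θ_j for all pairs (i,j) ∈ {(1,2),(2,3),(3,1)}; (ii) the angular momentum conditions Σ_k m_k sin θ_k cos θ_k cos φ_k = 0 and Σ_k m_k sin θ_k cos θ_k sin φ_k = 0; (iii) the equation of motion −ω² m₁ sin θ₁ cos θ₁ = 2 Σ_{i ∈ {2,3}} m₁ m_i U_{1i} (sin θ₁ cos θ_i − cos θ₁ sin θ_i cos(φ₁ − φ_i)); and (iv) cos θ_i cos θ_j > 0 for all pairs. Then U_ij < 0 for every pair (i,j). In particular, a repulsive force, for which U'(D²) > 0, admits no extended Lagrangian relative equilibrium on S². -/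
open Real

/-!
Fix a body `k`. Along the meridian of `k` the two angular momentum conditions combine into
`∑ i, m i * sin (θ i) * cos (θ i) * cos (φ k - φ i) = 0`. When `U' = -γ * cos (θ k) * cos (θ i)`,
this is the part of the force on `k` that depends on the longitudes, so the equation of motion
reduces to `ω ^ 2 = 2 * γ * ∑ i, m i * cos (θ i) ^ 2`. Hence `γ > 0`.
-/

variable {ι : Type*}

theorem sum_mul_cos_sub_eq_zero {s : Finset ι} {a φ : ι → ℝ}
    (hcos : ∑ i ∈ s, a i * cos (φ i) = 0) (hsin : ∑ i ∈ s, a i * sin (φ i) = 0) (α : ℝ) :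
    ∑ i ∈ s, a i * cos (α - φ i) = 0 := by
  calc ∑ i ∈ s, a i * cos (α - φ i)
      = cos α * ∑ i ∈ s, a i * cos (φ i) + sin α * ∑ i ∈ s, a i * sin (φ i) := by
        simp only [Finset.mul_sum, ← Finset.sum_add_distrib, cos_sub]
        exact Finset.sum_congr rfl fun i _ ↦ by ring
    _ = 0 := by rw [hcos, hsin, mul_zero, mul_zero, add_zero]

variable [Fintype ι] {m θ φ : ι → ℝ} {U : ι → ι → ℝ} {γ ω : ℝ} {k : ι}

/-- The polar component of the force on body `k` of a system on the sphere with masses `m`, polar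
angles `θ` and longitudes `φ`, where `U i j` stands for `U'(D_ij ^ 2)`. The term `i = k` is zero,
so the diagonal of `U` is irrelevant. -/
noncomputable def polarForce (m θ φ : ι → ℝ) (U : ι → ι → ℝ) (k : ι) : ℝ :=
  2 * ∑ i, m k * m i * U k i *
    (sin (θ k) * cos (θ i) - cos (θ k) * sin (θ i) * cos (φ k - φ i))

theorem polarForce_eq_of_lagrangian (hU : ∀ i, k ≠ i → U k i = -γ * cos (θ k) * cos (θ i))
    (hx : ∑ i, m i * sin (θ i) * cos (θ i) * cos (φ i) = 0)
    (hy : ∑ i, m i * sin (θ i) * cos (θ i) * sin (φ i) = 0) :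
    polarForce m θ φ U k =
      -(2 * γ * ∑ i, m i * cos (θ i) ^ 2) * (m k * sin (θ k) * cos (θ k)) := by
  have hterm (i : ι) : m k * m i * U k i *
        (sin (θ k) * cos (θ i) - cos (θ k) * sin (θ i) * cos (φ k - φ i)) =
      -(γ * m k * sin (θ k) * cos (θ k)) * (m i * cos (θ i) ^ 2) +
        γ * m k * cos (θ k) ^ 2 * (m i * sin (θ i) * cos (θ i) * cos (φ k - φ i)) := by
    obtain rfl | hki := eq_or_ne k i
    · rw [sub_self, cos_zero]
      ring
    · rw [hU i hki]
      ring
  rw [polarForce, Finset.sum_congr rfl fun i _ ↦ hterm i, Finset.sum_add_distrib,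
    ← Finset.mul_sum, ← Finset.mul_sum, sum_mul_cos_sub_eq_zero hx hy]
  ring

theorem angularVelocity_sq_eq_of_lagrangian (hmk : m k ≠ 0) (hsk : sin (θ k) ≠ 0)
    (hck : cos (θ k) ≠ 0) (hU : ∀ i, k ≠ i → U k i = -γ * cos (θ k) * cos (θ i))
    (hx : ∑ i, m i * sin (θ i) * cos (θ i) * cos (φ i) = 0)
    (hy : ∑ i, m i * sin (θ i) * cos (θ i) * sin (φ i) = 0)
    (heom : -ω ^ 2 * m k * sin (θ k) * cos (θ k) = polarForce m θ φ U k) :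
    ω ^ 2 = 2 * γ * ∑ i, m i * cos (θ i) ^ 2 := by
  rw [polarForce_eq_of_lagrangian hU hx hy] at heom
  have hk : m k * sin (θ k) * cos (θ k) ≠ 0 := mul_ne_zero (mul_ne_zero hmk hsk) hck
  apply mul_right_cancel₀ hk
  linear_combination -heom

theorem lagrangianConstant_pos (hm : ∀ i, 0 ≤ m i) (hω : ω ≠ 0)
    (h : ω ^ 2 = 2 * γ * ∑ i, m i * cos (θ i) ^ 2) : 0 < γ := by
  have hsum : 0 ≤ ∑ i, m i * cos (θ i) ^ 2 :=
    Finset.sum_nonneg fun i _ ↦ mul_nonneg (hm i) (sq_nonneg _)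
  have hprod : 0 < 2 * γ * ∑ i, m i * cos (θ i) ^ 2 := h ▸ sq_pos_of_ne_zero hω
  linarith [pos_of_mul_pos_left hprod hsum]

theorem no_repulsive_lagrangian_RE_general (hm : ∀ i, 0 ≤ m i) (hω : ω ≠ 0)
    (hmk : m k ≠ 0) (hsk : sin (θ k) ≠ 0) (hck : cos (θ k) ≠ 0)
    (hU : ∀ i j, i ≠ j → U i j = -γ * cos (θ i) * cos (θ j))
    (hx : ∑ i, m i * sin (θ i) * cos (θ i) * cos (φ i) = 0)
    (hy : ∑ i, m i * sin (θ i) * cos (θ i) * sin (φ i) = 0)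
    (heom : -ω ^ 2 * m k * sin (θ k) * cos (θ k) = polarForce m θ φ U k)
    {i j : ι} (hij : i ≠ j) :
    U i j < 0 ↔ 0 < cos (θ i) * cos (θ j) := by
  have hγ : 0 < γ := lagrangianConstant_pos hm hω <|
    angularVelocity_sq_eq_of_lagrangian hmk hsk hck (hU k) hx hy heom
  rw [hU i j hij, mul_assoc, neg_mul, neg_lt_zero, mul_pos_iff_of_pos_left hγ]

/-- For an extended Lagrangian relative equilibrium the force must be
attractive: under the conditions (i)–(iv), all `U_ij` are negative. In
particular a repulsive force (`U' > 0`) admits no extended Lagrangian relative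
equilibrium on the sphere. -/
theorem no_repulsive_lagrangian_RE
    (m₁ m₂ m₃ : ℝ) (hm₁ : 0 < m₁) (hm₂ : 0 < m₂) (hm₃ : 0 < m₃)
    (ω : ℝ) (hω : ω ≠ 0)
    (θ₁ θ₂ θ₃ : ℝ)
    (hθ₁ : θ₁ ∈ Set.Ioo 0 π) (hθ₂ : θ₂ ∈ Set.Ioo 0 π) (hθ₃ : θ₃ ∈ Set.Ioo 0 π)
    (hs₁ : 0 < sin θ₁) (hs₂ : 0 < sin θ₂) (hs₃ : 0 < sin θ₃)
    (hc₁ : cos θ₁ ≠ 0) (hc₂ : cos θ₂ ≠ 0) (hc₃ : cos θ₃ ≠ 0)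
    (φ₁ φ₂ φ₃ γ U₁₂ U₂₃ U₃₁ : ℝ)
    (hU₁₂ : U₁₂ = -γ * cos θ₁ * cos θ₂)
    (hU₂₃ : U₂₃ = -γ * cos θ₂ * cos θ₃)
    (hU₃₁ : U₃₁ = -γ * cos θ₃ * cos θ₁)
    (hx : m₁ * sin θ₁ * cos θ₁ * cos φ₁ + m₂ * sin θ₂ * cos θ₂ * cos φ₂
        + m₃ * sin θ₃ * cos θ₃ * cos φ₃ = 0)
    (hy : m₁ * sin θ₁ * cos θ₁ * sin φ₁ + m₂ * sin θ₂ * cos θ₂ * sin φ₂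
        + m₃ * sin θ₃ * cos θ₃ * sin φ₃ = 0)
    (heom : -ω ^ 2 * m₁ * sin θ₁ * cos θ₁
        = 2 * (m₁ * m₂ * U₁₂
              * (sin θ₁ * cos θ₂ - cos θ₁ * sin θ₂ * cos (φ₁ - φ₂))
            + m₁ * m₃ * U₃₁
              * (sin θ₁ * cos θ₃ - cos θ₁ * sin θ₃ * cos (φ₁ - φ₃))))
    (hhem₁₂ : 0 < cos θ₁ * cos θ₂)
    (hhem₂₃ : 0 < cos θ₂ * cos θ₃)
    (hhem₃₁ : 0 < cos θ₃ * cos θ₁) :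
    U₁₂ < 0 ∧ U₂₃ < 0 ∧ U₃₁ < 0 := by
  have hsign {i j : Fin 3} (hij : i ≠ j) := no_repulsive_lagrangian_RE_general (k := 0) (γ := γ)
    (m := ![m₁, m₂, m₃]) (θ := ![θ₁, θ₂, θ₃]) (φ := ![φ₁, φ₂, φ₃])
    (U := ![![0, U₁₂, U₃₁], ![U₁₂, 0, U₂₃], ![U₃₁, U₂₃, 0]])
    (by simp [Fin.forall_fin_succ, hm₁.le, hm₂.le, hm₃.le]) hω hm₁.ne' hs₁.ne' hc₁
    (by simp [Fin.forall_fin_succ, hU₁₂, hU₂₃, hU₃₁, mul_right_comm])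
    (by simpa [Fin.sum_univ_three] using hx) (by simpa [Fin.sum_univ_three] using hy)
    (by simpa [polarForce, Fin.sum_univ_three] using heom) hij
  exact ⟨(hsign (i := 0) (j := 1) (by decide)).mpr hhem₁₂,
    (hsign (i := 1) (j := 2) (by decide)).mpr hhem₂₃,
    (hsign (i := 2) (j := 0) (by decide)).mpr hhem₃₁⟩
end

section
/- Let m₁, m₂, m₃ > 0 and θ_k, φ_k ∈ ℝ for k = 1, 2, 3. Define cos σ_ij := cos θ_i cos θ_j + sin θ_i sin θ_j cos(φ_i − φ_j) for each pair, and assume the angular momentum conditions Σ_k m_k sin θ_k cos θ_k cos φ_k = 0 and Σ_k m_k sin θ_k cos θ_k sin φ_k = 0. Let J be the 3×3 real symmetric matrix with diagonal entries J₁₁ = m₂ + m₃, J₂₂ = m₃ + m₁, J₃₃ = m₁ + m₂ and off-diagonal entries J_ij = −√(m_i m_j) cos σ_ij for i ≠ j. Then the vector v = (√m₁ cos θ₁, √m₂ cos θ₂, √m₃ cos θ₃)ᵀ satisfies J v = λ v with λ = Σ_{l=1}^{3} m_l sin²θ_l. -/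
open Real Matrix

/-!
Put `w k = √(m k) • q k`. For unit vectors `q k` the matrix `J` is the total mass times the identity
minus the Gram matrix `A Aᵀ`, where `A x = (⟪w k, x⟫)ₖ`, while the inertia tensor `T` is the total
mass times the identity minus `Aᵀ A`. Hence `J A = A T`, so `A` carries a principal axis to an
eigenvector of `J` with the same eigenvalue. The angular momentum conditions say that the `z`-axis
is principal, and `A` sends it to `(√(m k) cos θ k)ₖ`.
-/

open Finset InnerProductSpace
open scoped RealInnerProductSpace

section Inertia

variable {ι E : Type*} [Fintype ι]

theorem gram_mulVec_inner {𝕜 : Type*} [RCLike 𝕜] [SeminormedAddCommGroup E] [InnerProductSpace 𝕜 E]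
    (w : ι → E) (x : E) :
    gram 𝕜 w *ᵥ (fun j ↦ inner 𝕜 (w j) x) = fun i ↦ inner 𝕜 (w i) (∑ j, inner 𝕜 (w j) x • w j) := by
  ext i
  simp only [mulVec, dotProduct, gram_apply, inner_sum, inner_smul_right, mul_comm]

variable [SeminormedAddCommGroup E] [InnerProductSpace ℝ E]

/-- The inertia tensor `x ↦ ∑ₖ mₖ (‖qₖ‖² x - ⟪qₖ, x⟫ qₖ)` of point masses `m k` at positions `q k`,
whose eigenvectors are the principal axes of the configuration. -/
noncomputable def inertiaTensor (m : ι → ℝ) (q : ι → E) : E →L[ℝ] E :=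
  ∑ k, m k • (‖q k‖ ^ 2 • ContinuousLinearMap.id ℝ E - rankOne ℝ (q k) (q k))

theorem inertiaTensor_apply (m : ι → ℝ) (q : ι → E) (x : E) :
    inertiaTensor m q x = (∑ k, m k * ‖q k‖ ^ 2) • x - ∑ k, (m k * ⟪q k, x⟫) • q k := by
  simp [inertiaTensor, smul_sub, smul_smul, sum_sub_distrib, sum_smul]

variable [DecidableEq ι]

/-- The mass-symmetric representation `J` of the inertia tensor, indexed by the bodies instead of
the coordinates of space. The factors `‖q k‖ ^ 2` on the diagonal, equal to `1` on the unit sphere,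
make it represent the inertia tensor for arbitrary positions. -/
noncomputable def massSymmetricInertia (m : ι → ℝ) (q : ι → E) : Matrix ι ι ℝ :=
  of fun i j ↦ if i = j then ∑ k ∈ univ.erase i, m k * ‖q k‖ ^ 2 else -√(m i * m j) * ⟪q i, q j⟫

theorem massSymmetricInertia_eq_smul_one_sub_gram {m : ι → ℝ} (hm : 0 ≤ m) (q : ι → E) :
    massSymmetricInertia m q =
      (∑ k, m k * ‖q k‖ ^ 2) • 1 - gram ℝ (fun k ↦ √(m k) • q k) := by
  ext i j
  obtain rfl | hij := eq_or_ne i j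
  · simp [massSymmetricInertia, norm_smul, mul_pow, sq_sqrt (hm i), sum_erase_eq_sub]
  · simp [massSymmetricInertia, real_inner_smul_left, real_inner_smul_right, hij,
      sqrt_mul (hm i), mul_assoc, mul_left_comm]

theorem massSymmetricInertia_mulVec_sqrt_mul_inner {m : ι → ℝ} (hm : 0 ≤ m) (q : ι → E) (x : E) :
    massSymmetricInertia m q *ᵥ (fun k ↦ √(m k) * ⟪q k, x⟫) =
      fun k ↦ √(m k) * ⟪q k, inertiaTensor m q x⟫ := by
  have hsum : ∑ k, ⟪√(m k) • q k, x⟫ • √(m k) • q k = ∑ k, (m k * ⟪q k, x⟫) • q k := by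
    refine sum_congr rfl fun k _ ↦ ?_
    rw [real_inner_smul_left, smul_smul, mul_right_comm, mul_self_sqrt (hm k)]
  simp_rw [← real_inner_smul_left]
  rw [massSymmetricInertia_eq_smul_one_sub_gram hm, sub_mulVec, smul_mulVec, one_mulVec,
    gram_mulVec_inner, hsum]
  ext k
  simp only [inertiaTensor_apply, inner_sub_right, inner_smul_right, Pi.sub_apply, Pi.smul_apply,
    smul_eq_mul]

theorem massSymmetricInertia_fin_three (m : Fin 3 → ℝ) (q : Fin 3 → E) :
    massSymmetricInertia m q =
      !![m 1 * ‖q 1‖ ^ 2 + m 2 * ‖q 2‖ ^ 2, -√(m 0 * m 1) * ⟪q 0, q 1⟫, -√(m 0 * m 2) * ⟪q 2, q 0⟫;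
         -√(m 1 * m 0) * ⟪q 0, q 1⟫, m 2 * ‖q 2‖ ^ 2 + m 0 * ‖q 0‖ ^ 2, -√(m 1 * m 2) * ⟪q 1, q 2⟫;
         -√(m 2 * m 0) * ⟪q 2, q 0⟫, -√(m 2 * m 1) * ⟪q 1, q 2⟫,
           m 0 * ‖q 0‖ ^ 2 + m 1 * ‖q 1‖ ^ 2] := by
  ext i j
  fin_cases i <;> fin_cases j <;>
    simp [massSymmetricInertia, sum_erase_eq_sub, Fin.sum_univ_three, real_inner_comm (q 0) (q 1),
      real_inner_comm (q 1) (q 2), real_inner_comm (q 2) (q 0)] <;> ring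

end Inertia

section Sphere

/-- The point of the unit sphere of `ℝ³` with polar angle `θ`, measured from the `z`-axis, and
azimuth `φ`. -/
noncomputable def spherePoint (θ φ : ℝ) : EuclideanSpace ℝ (Fin 3) :=
  !₂[sin θ * cos φ, sin θ * sin φ, cos θ]

theorem inner_spherePoint (θ θ' φ φ' : ℝ) :
    ⟪spherePoint θ φ, spherePoint θ' φ'⟫ =
      cos θ * cos θ' + sin θ * sin θ' * cos (φ - φ') := by
  simp only [spherePoint, PiLp.inner_apply, Fin.sum_univ_three, RCLike.inner_apply, conj_trivial,
    Matrix.cons_val, cos_sub]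
  ring

theorem norm_spherePoint (θ φ : ℝ) : ‖spherePoint θ φ‖ = 1 := by
  rw [norm_eq_sqrt_real_inner, inner_spherePoint, sub_self, cos_zero, mul_one, ← sq, ← sq,
    cos_sq_add_sin_sq, sqrt_one]

theorem inner_spherePoint_zAxis (θ φ : ℝ) :
    ⟪spherePoint θ φ, EuclideanSpace.single 2 1⟫ = cos θ := by
  simp [spherePoint, EuclideanSpace.inner_single_right]

variable {ι : Type*} [Fintype ι]

theorem inertiaTensor_spherePoint_zAxis {m θ φ : ι → ℝ}
    (hx : ∑ k, m k * sin (θ k) * cos (θ k) * cos (φ k) = 0)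
    (hy : ∑ k, m k * sin (θ k) * cos (θ k) * sin (φ k) = 0) :
    inertiaTensor m (fun k ↦ spherePoint (θ k) (φ k)) (EuclideanSpace.single 2 1) =
      (∑ k, m k * sin (θ k) ^ 2) • EuclideanSpace.single 2 1 := by
  simp only [inertiaTensor_apply, norm_spherePoint, inner_spherePoint_zAxis]
  ext i
  fin_cases i
  · simpa [spherePoint, mul_assoc, mul_left_comm] using hx
  · simpa [spherePoint, mul_assoc, mul_left_comm] using hy
  · simp [spherePoint, sin_sq, mul_sub, mul_assoc, ← sq]

theorem J_eigenvector_general [DecidableEq ι] {m θ φ : ι → ℝ} (hm : 0 ≤ m)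
    (hx : ∑ k, m k * sin (θ k) * cos (θ k) * cos (φ k) = 0)
    (hy : ∑ k, m k * sin (θ k) * cos (θ k) * sin (φ k) = 0) :
    massSymmetricInertia m (fun k ↦ spherePoint (θ k) (φ k)) *ᵥ (fun k ↦ √(m k) * cos (θ k)) =
      (∑ k, m k * sin (θ k) ^ 2) • fun k ↦ √(m k) * cos (θ k) := by
  have h := massSymmetricInertia_mulVec_sqrt_mul_inner hm (fun k ↦ spherePoint (θ k) (φ k))
    (EuclideanSpace.single 2 1)
  rw [inertiaTensor_spherePoint_zAxis hx hy] at h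
  simp only [inner_smul_right, inner_spherePoint_zAxis, mul_left_comm (√_)] at h
  exact h

end Sphere

/-- Under the angular momentum conditions, the vector
`(√m₁ cos θ₁, √m₂ cos θ₂, √m₃ cos θ₃)` is an eigenvector of the mass-symmetric
inertia matrix `J` with eigenvalue `λ = Σ_l m_l sin²θ_l`. -/
theorem J_eigenvector
    (m₁ m₂ m₃ : ℝ) (hm₁ : 0 < m₁) (hm₂ : 0 < m₂) (hm₃ : 0 < m₃)
    (θ₁ θ₂ θ₃ φ₁ φ₂ φ₃ : ℝ)
    (c₁₂ c₂₃ c₃₁ : ℝ)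
    (hc₁₂ : c₁₂ = cos θ₁ * cos θ₂ + sin θ₁ * sin θ₂ * cos (φ₁ - φ₂))
    (hc₂₃ : c₂₃ = cos θ₂ * cos θ₃ + sin θ₂ * sin θ₃ * cos (φ₂ - φ₃))
    (hc₃₁ : c₃₁ = cos θ₃ * cos θ₁ + sin θ₃ * sin θ₁ * cos (φ₃ - φ₁))
    (hx : m₁ * sin θ₁ * cos θ₁ * cos φ₁ + m₂ * sin θ₂ * cos θ₂ * cos φ₂
        + m₃ * sin θ₃ * cos θ₃ * cos φ₃ = 0)
    (hy : m₁ * sin θ₁ * cos θ₁ * sin φ₁ + m₂ * sin θ₂ * cos θ₂ * sin φ₂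
        + m₃ * sin θ₃ * cos θ₃ * sin φ₃ = 0)
    (J : Matrix (Fin 3) (Fin 3) ℝ)
    (hJ : J = !![m₂ + m₃, -Real.sqrt (m₁ * m₂) * c₁₂, -Real.sqrt (m₁ * m₃) * c₃₁;
                 -Real.sqrt (m₂ * m₁) * c₁₂, m₃ + m₁, -Real.sqrt (m₂ * m₃) * c₂₃;
                 -Real.sqrt (m₃ * m₁) * c₃₁, -Real.sqrt (m₃ * m₂) * c₂₃, m₁ + m₂])
    (v : Fin 3 → ℝ)
    (hv : v = ![Real.sqrt m₁ * cos θ₁, Real.sqrt m₂ * cos θ₂,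
                Real.sqrt m₃ * cos θ₃]) :
    J.mulVec v
      = (m₁ * sin θ₁ ^ 2 + m₂ * sin θ₂ ^ 2 + m₃ * sin θ₃ ^ 2) • v := by
  subst hc₁₂ hc₂₃ hc₃₁ hJ hv
  have hm : 0 ≤ ![m₁, m₂, m₃] := by simp [Pi.le_def, Fin.forall_fin_succ, hm₁.le, hm₂.le, hm₃.le]
  have h := J_eigenvector_general (θ := ![θ₁, θ₂, θ₃]) (φ := ![φ₁, φ₂, φ₃]) hm
    (by simpa [Fin.sum_univ_three] using hx) (by simpa [Fin.sum_univ_three] using hy)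
  have hv : (fun k ↦ √(![m₁, m₂, m₃] k) * cos (![θ₁, θ₂, θ₃] k)) =
      ![√m₁ * cos θ₁, √m₂ * cos θ₂, √m₃ * cos θ₃] := by
    ext k; fin_cases k <;> rfl
  simpa [massSymmetricInertia_fin_three, norm_spherePoint, inner_spherePoint, hv,
    Fin.sum_univ_three] using h
end
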